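/- Let β > 0 and let m ≥ 1 be an integer. There exists K > 0 depending only on m and β such that for all integers n ≥ 2, the expected total number of triangles of G^n_{m,β} satisfies |E[Σ_{1≤a<b<c≤n} m(a,b)·m(a,c)·m(b,c)] − (m(m−1)(1+β)²/β² + m(m−1)²(1+β)³/(β²(2+β))) · log n| ≤ K. -/

import Mathlib

open Finset

/-- A parent sequence of length `N`: for each `t ∈ {2,…,N}` an index `f t ∈ {1,…,t-1}`. -/
def ParentSeq (N : ℕ) : Type :=
  ∀ t : Set.Icc 2 N, Set.Icc 1 ((t : ℕ) - 1)

noncomputable instance (N : ℕ) : Fintype (ParentSeq N) := by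
  unfold ParentSeq
  classical
  infer_instance

/-- The value of a parent sequence at `j` (junk value `0` outside `{2,…,N}`). -/
def pval {N : ℕ} (f : ParentSeq N) (j : ℕ) : ℕ :=
  if h : 2 ≤ j ∧ j ≤ N then (f ⟨j, Set.mem_Icc.mpr h⟩ : ℕ) else 0

/-- The degree `d_t(v_i)` of vertex `i` at time `t` in the tree determined by `f`. -/
def deg {N : ℕ} (f : ParentSeq N) (t i : ℕ) : ℕ :=
  ((Finset.Icc 2 t).filter (fun j => pval f j = i)).card + (if 2 ≤ i then 1 else 0)

/-- The Móri probability of the parent sequence `f`. -/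
noncomputable def moriP {N : ℕ} (β : ℝ) (f : ParentSeq N) : ℝ :=
  ∏ t ∈ Finset.Icc 2 N, ((deg f (t - 1) (pval f t) : ℝ) + β) / ((2 + β) * ((t : ℝ) - 1) - 2)

/-- Expectation of `X` under the Móri measure on parent sequences of length `N`. -/
noncomputable def moriE (N : ℕ) (β : ℝ) (X : ParentSeq N → ℝ) : ℝ :=
  ∑ f : ParentSeq N, moriP β f * X f

open Classical in
/-- Probability of an event under the Móri measure on parent sequences of length `N`. -/
noncomputable def moriPr (N : ℕ) (β : ℝ) (p : ParentSeq N → Prop) : ℝ :=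
  ∑ f : ParentSeq N, if p f then moriP β f else 0

/-- The index of the merged vertex containing tree vertex `t` when merging in blocks of `m`. -/
def blk (m t : ℕ) : ℕ := (t - 1) / m + 1

/-- The number `m(a,b)` of edges joining `u_a` and `u_b` in the Móri graph `G^n_{m,β}`. -/
def mult (n m : ℕ) (f : ParentSeq (n * m)) (a b : ℕ) : ℕ :=
  ((Finset.Icc 2 (n * m)).filter (fun t =>
    (blk m t = a ∧ blk m (pval f t) = b) ∨ (blk m t = b ∧ blk m (pval f t) = a))).card

/-- The degree `d(u_i)` of the merged vertex `u_i` in the Móri graph `G^n_{m,β}`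
(a loop contributes `2`). -/
def degU (n m : ℕ) (f : ParentSeq (n * m)) (i : ℕ) : ℕ :=
  ((Finset.Icc 2 (n * m)).filter (fun t => blk m t = i)).card +
  ((Finset.Icc 2 (n * m)).filter (fun t => blk m (pval f t) = i)).card



/-! ### Reduction to a recursively defined expectation -/

/-- raw degree -/
def dg (F : ℕ → ℕ) (t i : ℕ) : ℕ :=
  ((Finset.Icc 2 t).filter (fun j => F j = i)).card + (if 2 ≤ i then 1 else 0)

/-- recursive expectation -/
noncomputable def ev (β : ℝ) : ℕ → ((ℕ → ℕ) → ℝ) → ℝ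
  | 0, X => X 0
  | 1, X => X 0
  | (t+2), X => ev β (t+1) (fun F => ∑ i ∈ Finset.Icc 1 (t+1),
      (((dg F (t+1) i : ℝ) + β) / ((2 + β) * ((t : ℝ) + 1) - 2)) * X (Function.update F (t+2) i))

lemma pval_of_mem {N : ℕ} (f : ParentSeq N) (j : ℕ) (h : 2 ≤ j ∧ j ≤ N) :
    pval f j = (f ⟨j, Set.mem_Icc.mpr h⟩ : ℕ) := by
  simp [pval, h]

lemma pval_inj {N : ℕ} (f g : ParentSeq N) (h : ∀ j, pval f j = pval g j) : f = g := by
  funext t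
  obtain ⟨t, ht⟩ := t
  have h1 := h t
  have h2 : 2 ≤ t ∧ t ≤ N := ht
  rw [pval_of_mem f t h2, pval_of_mem g t h2] at h1
  exact Subtype.ext h1

lemma pval_range {N : ℕ} (f : ParentSeq N) (j : ℕ) (h : 2 ≤ j) (h' : j ≤ N) :
    1 ≤ pval f j ∧ pval f j < j := by
  rw [pval_of_mem f j ⟨h, h'⟩]
  have := (f ⟨j, Set.mem_Icc.mpr ⟨h, h'⟩⟩).2
  simp only [Set.mem_Icc] at this
  omega

/-- build a parent sequence from a raw function -/
def mkSeq (N : ℕ) (F : ℕ → ℕ) (h : ∀ j, 2 ≤ j → j ≤ N → 1 ≤ F j ∧ F j < j) : ParentSeq N :=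
  fun t => ⟨F t, by
    have h1 := t.2
    simp only [Set.mem_Icc] at h1 ⊢
    have := h t h1.1 h1.2
    omega⟩

lemma pval_mkSeq (N : ℕ) (F : ℕ → ℕ) (h) (j : ℕ) :
    pval (mkSeq N F h) j = if 2 ≤ j ∧ j ≤ N then F j else 0 := by
  unfold pval mkSeq
  split_ifs <;> rfl

/-- extension by one value -/
def extSeq {N : ℕ} (f : ParentSeq (N+1)) (i : ℕ) (hi : i ∈ Finset.Icc 1 (N+1)) : ParentSeq (N+2) :=
  mkSeq (N+2) (Function.update (pval f) (N+2) i) (by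
    intro j h1 h2
    rw [Finset.mem_Icc] at hi
    by_cases hj : j = N+2
    · subst hj; simp; omega
    · rw [Function.update_of_ne hj]
      exact pval_range f j h1 (by omega))

lemma pval_extSeq {N : ℕ} (f : ParentSeq (N+1)) (i : ℕ) (hi : i ∈ Finset.Icc 1 (N+1)) :
    pval (extSeq f i hi) = Function.update (pval f) (N+2) i := by
  funext j
  rw [extSeq, pval_mkSeq]
  by_cases hj : j = N+2
  · subst hj; simp
  · rw [Function.update_of_ne hj]
    split_ifs with h
    · rfl
    · unfold pval
      rw [dif_neg (by omega)]

/-- restriction -/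
def resSeq {N : ℕ} (f : ParentSeq (N+2)) : ParentSeq (N+1) :=
  mkSeq (N+1) (pval f) (fun j h1 h2 => pval_range f j h1 (by omega))

lemma moriP_ext {N : ℕ} (β : ℝ) (f : ParentSeq (N+1)) (i : ℕ) (hi : i ∈ Finset.Icc 1 (N+1)) :
    moriP β (extSeq f i hi) = moriP β f *
      (((dg (pval f) (N+1) i : ℝ) + β) / ((2 + β) * ((N : ℝ) + 1) - 2)) := by
  have key : ∀ t ≤ N+1, ∀ k, deg (extSeq f i hi) t k = dg (pval f) t k := by
    intro t ht k
    unfold deg dg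
    rw [pval_extSeq]
    congr 2
    apply Finset.filter_congr
    intro j hj
    rw [Finset.mem_Icc] at hj
    rw [Function.update_of_ne (by omega)]
  unfold moriP
  refine (Finset.prod_Icc_succ_top (a := 2) (b := N + 1) (by omega) _).trans ?_
  congr 1
  · apply Finset.prod_congr rfl
    intro t ht
    rw [Finset.mem_Icc] at ht
    rw [key _ (by omega), pval_extSeq, Function.update_of_ne (by omega)]
    rfl
  · rw [key _ (by omega), pval_extSeq]
    simp

lemma moriE_eq_ev (β : ℝ) (N : ℕ) : ∀ X : (ℕ → ℕ) → ℝ,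
    moriE (N+1) β (fun f => X (pval f)) = ev β (N+1) X := by
  induction N with
  | zero =>
    intro X
    have hp : ∀ f : ParentSeq (0+1), pval f = 0 := by
      intro f; funext j; unfold pval; rw [dif_neg (by omega)]; rfl
    have : ∀ f g : ParentSeq (0+1), f = g := fun f g => pval_inj f g (by simp [hp])
    let f0 : ParentSeq (0+1) := mkSeq _ 0 (by intro j h1 h2; omega)
    unfold moriE
    rw [Finset.sum_eq_single f0 (fun b _ hb => absurd (this b f0) hb) (fun h => absurd (Finset.mem_univ _) h)]
    simp [moriP, ev, hp]
  | succ N ih =>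
    intro X
    have : ev β (N+1+1) X = ev β (N+1) (fun F => ∑ i ∈ Finset.Icc 1 (N+1),
      (((dg F (N+1) i : ℝ) + β) / ((2 + β) * ((N : ℝ) + 1) - 2)) * X (Function.update F (N+2) i)) := rfl
    rw [this, ← ih]
    unfold moriE
    simp_rw [Finset.mul_sum]
    have e1 : ∀ f : ParentSeq (N+1), ∑ i ∈ Finset.Icc 1 (N+1), moriP β f *
       ((((dg (pval f) (N+1) i : ℝ) + β) / ((2 + β) * ((N : ℝ) + 1) - 2)) * X (Function.update (pval f) (N+2) i))
       = ∑ i ∈ (Finset.Icc 1 (N+1)).attach, moriP β (extSeq f i.1 i.2) * X (pval (extSeq f i.1 i.2)) := by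
      intro f
      rw [← Finset.sum_attach]
      apply Finset.sum_congr rfl
      intro i _
      rw [moriP_ext, pval_extSeq]
      ring
    simp_rw [e1]
    rw [← Finset.sum_product']
    symm
    refine Finset.sum_bij' (fun p _ => extSeq p.1 p.2.1 p.2.2)
      (fun f _ => (resSeq f, ⟨pval f (N+2), by
        have := pval_range f (N+2) (by omega) le_rfl
        rw [Finset.mem_Icc]; omega⟩)) ?_ ?_ ?_ ?_ ?_
    · intros; simp
    · intros; simp
    · rintro ⟨f, i⟩ _
      refine Prod.ext ?_ ?_
      · apply pval_inj
        intro j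
        simp only [resSeq]
        rw [pval_mkSeq, pval_extSeq]
        split_ifs with h
        · rw [Function.update_of_ne (by omega)]
        · unfold pval; rw [dif_neg (by omega)]
      · apply Subtype.ext
        simp [pval_extSeq]
    · intro f _
      apply pval_inj
      intro j
      rw [pval_extSeq]
      by_cases hj : j = N+2
      · subst hj; simp
      · rw [Function.update_of_ne hj, resSeq, pval_mkSeq]
        split_ifs with h
        · rfl
        · unfold pval; rw [dif_neg (by omega)]
    · intros; rfl

def Valid (t : ℕ) (F : ℕ → ℕ) : Prop := ∀ j, 2 ≤ j → j ≤ t → 1 ≤ F j ∧ F j < j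

lemma Valid.upd {t : ℕ} {F : ℕ → ℕ} (h : Valid t F) {i : ℕ} (hi : i ∈ Finset.Icc 1 t) :
    Valid (t+1) (Function.update F (t+1) i) := by
  intro j h1 h2
  rw [Finset.mem_Icc] at hi
  by_cases hj : j = t+1
  · subst hj; simp; omega
  · rw [Function.update_of_ne hj]; exact h j h1 (by omega)

lemma ev_succ (β : ℝ) (t : ℕ) (ht : 1 ≤ t) (X : (ℕ → ℕ) → ℝ) :
    ev β (t+1) X = ev β t (fun F => ∑ i ∈ Finset.Icc 1 t,
      (((dg F t i : ℝ) + β) / ((2 + β) * (t : ℝ) - 2)) * X (Function.update F (t+1) i)) := by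
  obtain ⟨k, rfl⟩ : ∃ k, t = k+1 := ⟨t-1, by omega⟩
  simp [ev]

lemma ev_congr (β : ℝ) (t : ℕ) (ht : 1 ≤ t) : ∀ (X Y : (ℕ → ℕ) → ℝ)
    (_ : ∀ F, Valid t F → X F = Y F), ev β t X = ev β t Y := by
  induction t, ht using Nat.le_induction with
  | base => intro X Y h; exact h 0 (by intro j; omega)
  | succ t ht ih =>
    intro X Y h
    rw [ev_succ β t ht, ev_succ β t ht]
    apply ih
    intro F hF
    apply Finset.sum_congr rfl
    intro i hi
    rw [h _ (hF.upd hi)]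

lemma ev_add (β : ℝ) (t : ℕ) (ht : 1 ≤ t) : ∀ (X Y : (ℕ → ℕ) → ℝ),
    ev β t (fun F => X F + Y F) = ev β t X + ev β t Y := by
  induction t, ht using Nat.le_induction with
  | base => intro X Y; rfl
  | succ t ht ih =>
    intro X Y
    simp only [ev_succ β t ht, ← ih, mul_add, Finset.sum_add_distrib]

lemma ev_mul (β : ℝ) (t : ℕ) (ht : 1 ≤ t) : ∀ (r : ℝ) (X : (ℕ → ℕ) → ℝ),
    ev β t (fun F => r * X F) = r * ev β t X := by
  induction t, ht using Nat.le_induction with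
  | base => intro r X; rfl
  | succ t ht ih =>
    intro r X
    simp only [ev_succ β t ht, ← ih, Finset.mul_sum]
    congr 1; funext F; apply Finset.sum_congr rfl; intros; ring

lemma ev_zero (β : ℝ) (t : ℕ) (ht : 1 ≤ t) : ev β t (fun _ => 0) = 0 := by
  simpa using ev_mul β t ht 0 (fun _ => 0)

lemma ev_sum (β : ℝ) (t : ℕ) (ht : 1 ≤ t) {ι : Type} (s : Finset ι) (X : ι → (ℕ → ℕ) → ℝ) :
    ev β t (fun F => ∑ i ∈ s, X i F) = ∑ i ∈ s, ev β t (X i) := by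
  classical
  induction s using Finset.induction_on with
  | empty => simpa using ev_zero β t ht
  | insert a s ha ih => simp only [Finset.sum_insert ha]; rw [ev_add β t ht, ih]


/-! ### The five-dimensional state -/

noncomputable def wt (β : ℝ) (m a t : ℕ) (F : ℕ → ℕ) : ℝ :=
  ∑ i ∈ Finset.Icc 1 t, if blk m i = a then ((dg F t i : ℝ) + β) else 0

noncomputable def cnt (m a b t : ℕ) (F : ℕ → ℕ) : ℝ :=
  ∑ j ∈ Finset.Icc 2 t, if blk m j = b ∧ blk m (F j) = a then (1 : ℝ) else 0

lemma dg_upd {t : ℕ} (ht : 1 ≤ t) (F : ℕ → ℕ) (i k : ℕ) :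
    dg (Function.update F (t+1) i) (t+1) k = dg F t k + if i = k then 1 else 0 := by
  unfold dg
  rw [Finset.card_filter, Finset.card_filter, Finset.sum_Icc_succ_top (by omega), Function.update_self]
  have : ∑ j ∈ Finset.Icc 2 t, (if Function.update F (t+1) i j = k then 1 else 0)
      = ∑ j ∈ Finset.Icc 2 t, (if F j = k then 1 else 0) := by
    apply Finset.sum_congr rfl
    intro j hj
    rw [Finset.mem_Icc] at hj
    rw [Function.update_of_ne (by omega)]
  rw [this]
  ring

lemma dg_new {t : ℕ} (ht : 1 ≤ t) (F : ℕ → ℕ) (hF : Valid t F) : dg F t (t+1) = 1 := by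
  unfold dg
  rw [Finset.filter_eq_empty_iff.mpr]
  · simp; omega
  · intro j hj
    rw [Finset.mem_Icc] at hj
    have := hF j hj.1 hj.2
    omega

lemma wt_upd {β : ℝ} {m a t : ℕ} (ht : 1 ≤ t) (F : ℕ → ℕ) (hF : Valid t F) (i : ℕ)
    (hi : i ∈ Finset.Icc 1 t) :
    wt β m a (t+1) (Function.update F (t+1) i) =
      wt β m a t F + (if blk m i = a then 1 else 0) + (if blk m (t+1) = a then 1 + β else 0) := by
  unfold wt
  rw [Finset.sum_Icc_succ_top (by omega)]
  simp only [dg_upd ht]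
  rw [dg_new ht F hF]
  have hi' := Finset.mem_Icc.mp hi
  rw [if_neg (by omega : ¬ (i = t+1))]
  congr 1
  · rw [← Finset.sum_filter_add_sum_filter_not (Finset.Icc 1 t) (fun k => k = i) (f := fun i => if blk m i = a then ((dg F t i : ℝ) + β) else 0),
      ← Finset.sum_filter_add_sum_filter_not (Finset.Icc 1 t) (fun k => k = i)]
    rw [Finset.filter_eq' , if_pos hi]
    simp only [Finset.sum_singleton]
    have : ∀ x ∈ Finset.filter (fun k => ¬ k = i) (Finset.Icc 1 t),
        (if blk m x = a then (((dg F t x + if i = x then 1 else 0 : ℕ) : ℝ) + β) else 0) =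
        if blk m x = a then ((dg F t x : ℝ) + β) else 0 := by
      intro x hx
      rw [Finset.mem_filter] at hx
      rw [if_neg (fun h : i = x => hx.2 h.symm)]
      simp
    rw [Finset.sum_congr rfl this]
    simp only [if_true]
    split_ifs <;> push_cast <;> ring
  · simp

lemma cnt_upd {m a b t : ℕ} (ht : 1 ≤ t) (F : ℕ → ℕ) (i : ℕ) :
    cnt m a b (t+1) (Function.update F (t+1) i) =
      cnt m a b t F + (if blk m (t+1) = b ∧ blk m i = a then 1 else 0) := by
  unfold cnt
  rw [Finset.sum_Icc_succ_top (by omega), Function.update_self]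
  congr 1
  apply Finset.sum_congr rfl
  intro j hj
  rw [Finset.mem_Icc] at hj
  rw [Function.update_of_ne (by omega)]

lemma total_wt (β : ℝ) (t : ℕ) (ht : 1 ≤ t) (F : ℕ → ℕ) (hF : Valid t F) :
    ∑ i ∈ Finset.Icc 1 t, ((dg F t i : ℝ) + β) = (2 + β) * t - 2 := by
  have h1 : ∑ i ∈ Finset.Icc 1 t, ((Finset.Icc 2 t).filter (fun j => F j = i)).card = t - 1 := by
    rw [← Finset.card_eq_sum_card_fiberwise]
    · simp
    · intro j hj
      have hj' := Finset.mem_Icc.mp (Finset.mem_coe.mp hj)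
      have := hF j hj'.1 hj'.2
      simp only [Finset.coe_Icc, Set.mem_Icc]; omega
  have h2 : ∑ i ∈ Finset.Icc 1 t, (if 2 ≤ i then 1 else 0) = t - 1 := by
    rw [← Finset.card_filter]
    have : Finset.filter (fun i => 2 ≤ i) (Finset.Icc 1 t) = Finset.Icc 2 t := by
      ext i; simp only [Finset.mem_filter, Finset.mem_Icc]; omega
    rw [this]; simp
  have h3 : ∑ i ∈ Finset.Icc 1 t, dg F t i = 2 * (t - 1) := by
    unfold dg; rw [Finset.sum_add_distrib, h1, h2]; ring
  rw [Finset.sum_add_distrib, ← Nat.cast_sum, h3]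
  push_cast [Nat.cast_sub ht]
  simp; ring

/-- step weight -/
noncomputable def sg (β : ℝ) (t : ℕ) : ℝ := 1 / ((2 + β) * t - 2)

lemma den_pos {β : ℝ} (hβ : 0 < β) {t : ℕ} (ht : 1 ≤ t) : 0 < (2 + β) * (t : ℝ) - 2 := by
  have : (1 : ℝ) ≤ t := by exact_mod_cast ht
  nlinarith

noncomputable def es (β : ℝ) (m a b c t : ℕ) (φ : ℝ → ℝ → ℝ → ℝ → ℝ → ℝ) : ℝ :=
  ev β t (fun F => φ (wt β m a t F) (wt β m b t F) (cnt m a b t F) (cnt m a c t F) (cnt m b c t F))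

noncomputable def dl (m a t : ℕ) : ℝ := if blk m (t+1) = a then 1 else 0

lemma es_succ {β : ℝ} (hβ : 0 < β) (m a b c t : ℕ) (hab : a ≠ b) (ht : 1 ≤ t)
    (φ : ℝ → ℝ → ℝ → ℝ → ℝ → ℝ) :
    es β m a b c (t+1) φ = es β m a b c t (fun x y Y u v =>
      sg β t * x * φ (x + 1 + dl m a t * (1+β)) (y + dl m b t * (1+β)) (Y + dl m b t) (u + dl m c t) v
      + sg β t * y * φ (x + dl m a t * (1+β)) (y + 1 + dl m b t * (1+β)) Y u (v + dl m c t)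
      + (1 - sg β t * x - sg β t * y) * φ (x + dl m a t * (1+β)) (y + dl m b t * (1+β)) Y u v) := by
  unfold es
  rw [ev_succ β t ht]
  apply ev_congr β t ht
  intro F hF
  have hS := den_pos hβ ht
  set x := wt β m a t F with hx
  set y := wt β m b t F with hy
  set Y := cnt m a b t F
  set u := cnt m a c t F
  set v := cnt m b c t F
  set g1 := φ (x + 1 + dl m a t * (1+β)) (y + dl m b t * (1+β)) (Y + dl m b t) (u + dl m c t) v
  set g2 := φ (x + dl m a t * (1+β)) (y + 1 + dl m b t * (1+β)) Y u (v + dl m c t)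
  set g0 := φ (x + dl m a t * (1+β)) (y + dl m b t * (1+β)) Y u v
  have hd : ∀ a, (if blk m (t+1) = a then 1 + β else 0) = dl m a t * (1+β) := by
    intro a; unfold dl; split_ifs <;> ring
  have e : ∀ i ∈ Finset.Icc 1 t,
      (((dg F t i : ℝ) + β) / ((2 + β) * (t : ℝ) - 2)) * φ (wt β m a (t+1) (Function.update F (t+1) i))
        (wt β m b (t+1) (Function.update F (t+1) i)) (cnt m a b (t+1) (Function.update F (t+1) i))
        (cnt m a c (t+1) (Function.update F (t+1) i)) (cnt m b c (t+1) (Function.update F (t+1) i))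
      = sg β t * g0 * ((dg F t i : ℝ) + β) + sg β t * (g1 - g0) * (if blk m i = a then ((dg F t i : ℝ) + β) else 0)
        + sg β t * (g2 - g0) * (if blk m i = b then ((dg F t i : ℝ) + β) else 0) := by
    intro i hi
    rw [wt_upd ht F hF i hi, wt_upd ht F hF i hi, cnt_upd ht, cnt_upd ht, cnt_upd ht, hd, hd]
    by_cases h1 : blk m i = a
    · have h2 : blk m i ≠ b := fun h => hab (h1.symm.trans h)
      simp only [h1, hab, if_true, and_true, and_false, if_false, add_zero]
      change _ * g1 = _
      unfold sg; ring
    · by_cases h2 : blk m i = b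
      · simp only [h2, hab.symm, if_true, and_true, and_false, if_false, add_zero]
        change _ * g2 = _
        unfold sg; ring
      · simp only [h1, h2, and_false, if_false, add_zero]
        change _ * g0 = _
        unfold sg; ring
  rw [Finset.sum_congr rfl e, Finset.sum_add_distrib, Finset.sum_add_distrib, ← Finset.mul_sum,
    ← Finset.mul_sum, ← Finset.mul_sum, total_wt β t ht F hF]
  change _ + _ * x + _ * y = _
  have : sg β t * ((2+β)*t-2) = 1 := by unfold sg; field_simp
  linear_combination g0 * this

lemma es_add {β : ℝ} {m a b c t : ℕ} (ht : 1 ≤ t) (φ ψ : ℝ → ℝ → ℝ → ℝ → ℝ → ℝ) :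
    es β m a b c t (fun x y Y u v => φ x y Y u v + ψ x y Y u v) =
      es β m a b c t φ + es β m a b c t ψ := ev_add β t ht _ _

lemma es_mul {β : ℝ} {m a b c t : ℕ} (ht : 1 ≤ t) (r : ℝ) (φ : ℝ → ℝ → ℝ → ℝ → ℝ → ℝ) :
    es β m a b c t (fun x y Y u v => r * φ x y Y u v) =
      r * es β m a b c t φ := ev_mul β t ht _ _

lemma es_one {β : ℝ} {m a b c : ℕ} (φ : ℝ → ℝ → ℝ → ℝ → ℝ → ℝ) :
    es β m a b c 1 φ = φ (if a = 1 then β else 0) (if b = 1 then β else 0) 0 0 0 := by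
  have h : ∀ a, wt β m a 1 0 = if a = 1 then β else 0 := by
    intro a; simp [wt, dg, blk, eq_comm]
  simp [es, ev, cnt, h]

lemma es_const {β : ℝ} (hβ : 0 < β) {m a b c t : ℕ} (hab : a ≠ b) (ht : 1 ≤ t) (r : ℝ) :
    es β m a b c t (fun _ _ _ _ _ => r) = r := by
  induction t, ht using Nat.le_induction with
  | base => rw [es_one]
  | succ t ht ih =>
    rw [es_succ hβ m a b c t hab ht]
    refine Eq.trans ?_ ih
    congr 1; funext x y Y u v; ring


/-! ### Recursions for moments -/

def Ap (x : ℕ → ℝ) (k : ℝ) : Prop := ∃ C : ℝ, 0 ≤ C ∧ ∀ b : ℕ, 2 ≤ b → |x b - k| ≤ C / b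

lemma Ap.const (k : ℝ) : Ap (fun _ => k) k := ⟨0, le_rfl, by intro b _; simp⟩

lemma Ap.congr {x y : ℕ → ℝ} {k l : ℝ} (h : Ap x k) (hx : ∀ b, 2 ≤ b → x b = y b) (hk : k = l) : Ap y l := by
  obtain ⟨C, h0, h⟩ := h
  subst hk
  exact ⟨C, h0, fun b hb => by rw [← hx b hb]; exact h b hb⟩

lemma Ap.add {x y : ℕ → ℝ} {k l : ℝ} (hx : Ap x k) (hy : Ap y l) : Ap (fun b => x b + y b) (k + l) := by
  obtain ⟨C, hC, hx⟩ := hx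
  obtain ⟨D, hD, hy⟩ := hy
  refine ⟨C + D, by positivity, fun b hb => ?_⟩
  have : x b + y b - (k + l) = (x b - k) + (y b - l) := by ring
  rw [this, add_div]
  exact (abs_add_le _ _).trans (add_le_add (hx b hb) (hy b hb))

lemma Ap.mul {x y : ℕ → ℝ} {k l : ℝ} (hx : Ap x k) (hy : Ap y l) : Ap (fun b => x b * y b) (k * l) := by
  obtain ⟨C, hC, hx⟩ := hx
  obtain ⟨D, hD, hy⟩ := hy
  refine ⟨C * D + |k| * D + C * |l|, by positivity, fun b hb => ?_⟩
  have hb1 : (1 : ℝ) ≤ b := by exact_mod_cast (by omega : 1 ≤ b)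
  have : x b * y b - k * l = (x b - k) * (y b - l) + k * (y b - l) + (x b - k) * l := by ring
  rw [this]
  have hx := hx b hb
  have hy := hy b hb
  have hD' : D / b ≤ D := div_le_self hD hb1
  calc _ ≤ |x b - k| * |y b - l| + |k| * |y b - l| + |x b - k| * |l| := by
        refine (abs_add_le _ _).trans ?_
        rw [abs_mul (x b - k) l]
        gcongr
        refine (abs_add_le _ _).trans ?_
        rw [abs_mul, abs_mul]
    _ ≤ C / b * D + |k| * (D / b) + C / b * |l| := by
        gcongr
        exact hy.trans hD'
    _ = _ := by ring

lemma blk_eq {m b k : ℕ} (hb : 1 ≤ b) (hk : k < m) : blk m ((b-1)*m+k+1) = b := by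
  unfold blk
  have : (b-1)*m+k+1-1 = k + m * (b-1) := by rw [mul_comm]; omega
  rw [this, Nat.add_mul_div_left _ _ (by omega), Nat.div_eq_of_lt hk]
  omega

lemma dl_self {m b k : ℕ} (hb : 1 ≤ b) (hk : k < m) : dl m b ((b-1)*m+k) = 1 := by
  unfold dl; rw [if_pos (blk_eq hb hk)]

lemma dl_ne {m a b k : ℕ} (hb : 1 ≤ b) (hk : k < m) (h : b ≠ a) : dl m a ((b-1)*m+k) = 0 := by
  unfold dl; rw [if_neg]; rw [blk_eq hb hk]; exact h

lemma dl_lt {m b t : ℕ} (hb : 1 ≤ b) (hm : 1 ≤ m) (h : t < (b-1)*m) : dl m b t = 0 := by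
  unfold dl blk; rw [if_neg]
  have : t / m < b - 1 := Nat.div_lt_of_lt_mul (by rw [mul_comm]; exact h)
  simp; omega

lemma dl_gt {m b t : ℕ} (hm : 1 ≤ m) (h : b*m ≤ t) : dl m b t = 0 := by
  unfold dl blk; rw [if_neg]
  have : b ≤ t / m := (Nat.le_div_iff_mul_le (by omega)).mpr h
  simp; omega

lemma sg_pos {β : ℝ} (hβ : 0 < β) {t : ℕ} (ht : 1 ≤ t) : 0 < sg β t :=
  one_div_pos.mpr (den_pos hβ ht)

lemma time_ge {m b k : ℕ} (hm : 1 ≤ m) (hb : 2 ≤ b) : 1 ≤ (b-1)*m+k := by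
  have : 1 ≤ (b-1)*m := Nat.mul_pos (by omega) (by omega)
  omega

lemma sg_ap {β : ℝ} (hβ : 0 < β) {m : ℕ} (hm : 1 ≤ m) (k : ℕ) :
    Ap (fun b => (b : ℝ) * sg β ((b-1)*m+k)) (1 / ((2+β)*m)) := by
  have hm' : (1 : ℝ) ≤ m := by exact_mod_cast hm
  refine ⟨((2+β)*(m+k)+2) / ((2+β)*m*(β/2)), by positivity, fun b hb => ?_⟩
  have hb' : (2 : ℝ) ≤ b := by exact_mod_cast hb
  have hD := den_pos hβ (time_ge (k := k) hm hb)
  unfold sg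
  have hc : (((b-1)*m+k : ℕ) : ℝ) = ((b:ℝ)-1)*m+k := by
    push_cast [Nat.cast_sub (by omega : 1 ≤ b)]; ring
  beta_reduce
  rw [hc] at hD ⊢
  have hk : (0:ℝ) ≤ k := by positivity
  set D := (2+β)*(((b:ℝ)-1)*m+k) - 2 with hDd
  have hDl : β/2 * b ≤ D := by
    have : (b:ℝ)-1 ≤ ((b:ℝ)-1)*m+k := by nlinarith
    rw [hDd]
    nlinarith
  have : (b:ℝ) * (1 / D) - 1 / ((2+β)*m) = ((2+β)*(m-k)+2) / ((2+β)*m*D) := by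
    rw [hDd] at hD ⊢
    field_simp
    ring
  rw [this, abs_div, abs_of_pos (by positivity : 0 < (2+β)*m*D), div_div]
  have h1 : |(2+β)*((m:ℝ)-k)+2| ≤ (2+β)*(m+k)+2 := by
    rw [abs_le]; constructor <;> nlinarith
  calc _ ≤ ((2+β)*(m+k)+2) / ((2+β)*m*D) := by gcongr
    _ ≤ ((2+β)*(m+k)+2) / ((2+β)*m*(β/2)*b) := by
      rw [mul_assoc ((2+β)*m)]; gcongr

lemma inv_ap : Ap (fun b => 1 / (b:ℝ)) 0 := ⟨1, by norm_num, fun b _ => by simp⟩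

lemma sg_ap0 {β : ℝ} (hβ : 0 < β) {m : ℕ} (hm : 1 ≤ m) (k : ℕ) :
    Ap (fun b => sg β ((b-1)*m+k)) 0 := by
  refine ((sg_ap hβ hm k).mul inv_ap).congr ?_ (by ring)
  intro b hb
  have : (b:ℝ) ≠ 0 := by positivity
  field_simp

section moments
variable {β : ℝ} {m a b c t : ℕ}

lemma r_x (hβ : 0 < β) (hab : a ≠ b) (ht : 1 ≤ t) :
    es β m a b c (t+1) (fun x _ _ _ _ => x) =
      (1 + sg β t) * es β m a b c t (fun x _ _ _ _ => x) + dl m a t * (1+β) := by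
  rw [es_succ hβ m a b c t hab ht]
  conv_rhs => rw [← es_const hβ hab ht (c := c) (m := m) (dl m a t * (1+β))]
  rw [← es_mul ht, ← es_add ht]
  congr 1; funext x y Y u v; ring

lemma r_xx (hβ : 0 < β) (hab : a ≠ b) (ht : 1 ≤ t) :
    es β m a b c (t+1) (fun x _ _ _ _ => x*x) =
      (1 + 2 * sg β t) * es β m a b c t (fun x _ _ _ _ => x*x)
      + (2 * (dl m a t * (1+β)) + sg β t * (2 * (dl m a t * (1+β)) + 1)) * es β m a b c t (fun x _ _ _ _ => x)
      + (dl m a t * (1+β))*(dl m a t * (1+β)) := by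
  rw [es_succ hβ m a b c t hab ht]
  conv_rhs => rw [← es_const hβ hab ht (c := c) (m := m) (dl m a t * (1+β)*(dl m a t * (1+β)))]
  rw [← es_mul ht, ← es_mul ht, ← es_add ht, ← es_add ht]
  congr 1; funext x y Y u v; ring

lemma r_q (hβ : 0 < β) (hab : a ≠ b) (ht : 1 ≤ t) (ha : dl m a t = 0) :
    es β m a b c (t+1) (fun x _ _ _ _ => x*x+x) =
      (1 + 2 * sg β t) * es β m a b c t (fun x _ _ _ _ => x*x+x) := by
  rw [es_succ hβ m a b c t hab ht, ← es_mul ht]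
  congr 1; funext x y Y u v; rw [ha]; ring

lemma r_w (hβ : 0 < β) (hab : a ≠ b) (ht : 1 ≤ t) (ha : dl m a t = 0) (hb : dl m b t = 1) :
    es β m a b c (t+1) (fun x _ Y _ _ => Y*x) =
      (1 + sg β t) * es β m a b c t (fun x _ Y _ _ => Y*x)
      + sg β t * es β m a b c t (fun x _ _ _ _ => x*x+x) := by
  rw [es_succ hβ m a b c t hab ht, ← es_mul ht, ← es_mul ht, ← es_add ht]
  congr 1; funext x y Y u v; rw [ha, hb]; ring

lemma r_z (hβ : 0 < β) (hab : a ≠ b) (ht : 1 ≤ t) (ha : dl m a t = 0) (hb : dl m b t = 1) :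
    es β m a b c (t+1) (fun x y _ _ _ => (x*x+x)*y) =
      (1 + 3 * sg β t) * es β m a b c t (fun x y _ _ _ => (x*x+x)*y)
      + (1+β)*(1+2*sg β t) * es β m a b c t (fun x _ _ _ _ => x*x+x) := by
  rw [es_succ hβ m a b c t hab ht, ← es_mul ht, ← es_mul ht, ← es_add ht]
  congr 1; funext x y Y u v; rw [ha, hb]; ring

lemma r_r (hβ : 0 < β) (hab : a ≠ b) (ht : 1 ≤ t) (ha : dl m a t = 0) (hb : dl m b t = 1) :
    es β m a b c (t+1) (fun x y Y _ _ => Y*x*y) =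
      (1 + 2 * sg β t) * es β m a b c t (fun x y Y _ _ => Y*x*y)
      + (1+β)*(1+sg β t) * es β m a b c t (fun x _ Y _ _ => Y*x)
      + sg β t * es β m a b c t (fun x y _ _ _ => (x*x+x)*y)
      + (1+β)* sg β t * es β m a b c t (fun x _ _ _ _ => x*x+x) := by
  rw [es_succ hβ m a b c t hab ht, ← es_mul ht, ← es_mul ht, ← es_mul ht, ← es_mul ht, ← es_add ht,
    ← es_add ht, ← es_add ht]
  congr 1; funext x y Y u v; rw [ha, hb]; ring

lemma r_r0 (hβ : 0 < β) (hab : a ≠ b) (ht : 1 ≤ t) (ha : dl m a t = 0) (hb : dl m b t = 0) :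
    es β m a b c (t+1) (fun x y Y _ _ => Y*x*y) =
      (1 + 2 * sg β t) * es β m a b c t (fun x y Y _ _ => Y*x*y) := by
  rw [es_succ hβ m a b c t hab ht, ← es_mul ht]
  congr 1; funext x y Y u v; rw [ha, hb]; ring

lemma r_u (hβ : 0 < β) (hab : a ≠ b) (ht : 1 ≤ t) (hb : dl m b t = 0)
    (hc : dl m c t = 1) :
    es β m a b c (t+1) (fun _ y Y u _ => Y*u*y) =
      (1 + sg β t) * es β m a b c t (fun _ y Y u _ => Y*u*y)
      + sg β t * es β m a b c t (fun x y Y _ _ => Y*x*y) := by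
  rw [es_succ hβ m a b c t hab ht, ← es_mul ht, ← es_mul ht, ← es_add ht]
  congr 1; funext x y Y u v; rw [hb, hc]; ring

lemma r_v (hβ : 0 < β) (hab : a ≠ b) (ht : 1 ≤ t) (ha : dl m a t = 0) (hb : dl m b t = 0)
    (hc : dl m c t = 1) :
    es β m a b c (t+1) (fun x _ Y _ v => Y*x*v) =
      (1 + sg β t) * es β m a b c t (fun x _ Y _ v => Y*x*v)
      + sg β t * es β m a b c t (fun x y Y _ _ => Y*x*y) := by
  rw [es_succ hβ m a b c t hab ht, ← es_mul ht, ← es_mul ht, ← es_add ht]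
  congr 1; funext x y Y u v; rw [ha, hb, hc]; ring

lemma r_uv (hβ : 0 < β) (hab : a ≠ b) (ht : 1 ≤ t) (hb : dl m b t = 0)
    (hc : dl m c t = 1) :
    es β m a b c (t+1) (fun _ _ Y u v => Y*u*v) =
      es β m a b c t (fun _ _ Y u v => Y*u*v)
      + sg β t * es β m a b c t (fun _ y Y u _ => Y*u*y)
      + sg β t * es β m a b c t (fun x _ Y _ v => Y*x*v) := by
  rw [es_succ hβ m a b c t hab ht, ← es_mul ht, ← es_mul ht, ← es_add ht, ← es_add ht]
  congr 1; funext x y Y u v; rw [hb, hc]; ring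

lemma r_uv0 (hβ : 0 < β) (hab : a ≠ b) (ht : 1 ≤ t) (hb : dl m b t = 0)
    (hc : dl m c t = 0) :
    es β m a b c (t+1) (fun _ _ Y u v => Y*u*v) =
      es β m a b c t (fun _ _ Y u v => Y*u*v) := by
  rw [es_succ hβ m a b c t hab ht]
  congr 1; funext x y Y u v; rw [hb, hc]; ring

lemma es_before_b (hβ : 0 < β) (hab : a ≠ b) (hm : 1 ≤ m) (hb : 2 ≤ b) (hbc : b ≤ c) (ht : 1 ≤ t) :
    ∀ (_ : t ≤ (b-1)*m) (φ : ℝ → ℝ → ℝ → ℝ → ℝ → ℝ),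
    es β m a b c t φ = es β m a b c t (fun x _ _ _ _ => φ x 0 0 0 0) := by
  induction t, ht using Nat.le_induction with
  | base => intro _ φ; rw [es_one, es_one, if_neg (by omega : ¬ b = 1)]
  | succ t ht ih =>
    intro h φ
    have h1 : dl m b t = 0 := dl_lt (by omega) hm (by omega)
    have h2 : dl m c t = 0 := dl_lt (by omega) hm (by
      have : (b-1)*m ≤ (c-1)*m := Nat.mul_le_mul_right _ (by omega)
      omega)
    rw [es_succ hβ m a b c t hab ht, es_succ hβ m a b c t hab ht, ih (by omega)]
    conv_rhs => rw [ih (by omega)]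
    simp [h1, h2]

lemma es_before_c (hβ : 0 < β) (hab : a ≠ b) (hm : 1 ≤ m) (hc : 2 ≤ c) (ht : 1 ≤ t) :
    ∀ (_ : t ≤ (c-1)*m) (φ : ℝ → ℝ → ℝ → ℝ → ℝ → ℝ),
    es β m a b c t φ = es β m a b c t (fun x y Y _ _ => φ x y Y 0 0) := by
  induction t, ht using Nat.le_induction with
  | base => intro _ φ; rw [es_one, es_one]
  | succ t ht ih =>
    intro h φ
    have h2 : dl m c t = 0 := dl_lt (by omega) hm (by omega)
    rw [es_succ hβ m a b c t hab ht, es_succ hβ m a b c t hab ht, ih (by omega)]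
    conv_rhs => rw [ih (by omega)]
    simp [h2]

end moments


section blocks
variable {β : ℝ} {m : ℕ}

lemma x_indep (hβ : 0 < β) {a b c b' c' t : ℕ} (hab : a ≠ b) (hab' : a ≠ b') (ht : 1 ≤ t) :
    es β m a b c t (fun x _ _ _ _ => x) = es β m a b' c' t (fun x _ _ _ _ => x) ∧
    es β m a b c t (fun x _ _ _ _ => x*x) = es β m a b' c' t (fun x _ _ _ _ => x*x) := by
  induction t, ht using Nat.le_induction with
  | base => simp only [es_one, and_self]
  | succ t ht ih =>
    rw [r_x hβ hab ht, r_x hβ hab' ht, r_xx hβ hab ht, r_xx hβ hab' ht, ih.1, ih.2]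
    exact ⟨rfl, rfl⟩

/-- the value of E[x²+x] at the end of block a -/
noncomputable def Qa (β : ℝ) (m a : ℕ) : ℝ := es β m a (a+1) (a+1) (a*m) (fun x _ _ _ _ => x*x+x)

lemma Qa_eq (hβ : 0 < β) (hm : 1 ≤ m) {a b c : ℕ} (ha : 1 ≤ a) (hab : a ≠ b) :
    es β m a b c (a*m) (fun x _ _ _ _ => x*x+x) = Qa β m a := by
  have ht : 1 ≤ a*m := Nat.mul_pos ha hm
  unfold Qa
  rw [es_add ht, es_add ht, (x_indep hβ hab (by omega : a ≠ a+1) ht).1,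
    (x_indep hβ hab (by omega : a ≠ a+1) ht).2]

lemma x_before (hβ : 0 < β) (hm : 1 ≤ m) {a b c t : ℕ} (ha : 2 ≤ a) (hab : a ≠ b) (ht : 1 ≤ t)
    (h : t ≤ (a-1)*m) :
    es β m a b c t (fun x _ _ _ _ => x) = 0 ∧ es β m a b c t (fun x _ _ _ _ => x*x) = 0 := by
  induction t, ht using Nat.le_induction with
  | base => simp only [es_one, if_neg (by omega : ¬ a = 1)]; simp
  | succ t ht ih =>
    have h1 : dl m a t = 0 := dl_lt (by omega) hm (by omega)
    obtain ⟨i1, i2⟩ := ih (by omega)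
    rw [r_x hβ hab ht, r_xx hβ hab ht, i1, i2, h1]
    simp

lemma blockA (hβ : 0 < β) (hm : 1 ≤ m) (k : ℕ) (hk : k ≤ m) :
    Ap (fun a => es β m a (a+1) (a+1) ((a-1)*m+k) (fun x _ _ _ _ => x)) (k*(1+β)) ∧
    Ap (fun a => es β m a (a+1) (a+1) ((a-1)*m+k) (fun x _ _ _ _ => x*x)) ((k*(1+β))*(k*(1+β))) := by
  induction k with
  | zero =>
    constructor
    · refine (Ap.const 0).congr (fun a ha => ?_) (by simp)
      rw [(x_before hβ hm ha (by omega) (time_ge hm ha) (by omega)).1]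
    · refine (Ap.const 0).congr (fun a ha => ?_) (by simp)
      rw [(x_before hβ hm ha (by omega) (time_ge hm ha) (by omega)).2]
  | succ k ih =>
    obtain ⟨i1, i2⟩ := ih (by omega)
    have s0 := sg_ap0 hβ hm k
    constructor
    · refine ((((Ap.const 1).add s0).mul i1).add (Ap.const (1+β))).congr (fun a ha => ?_) (by push_cast; ring)
      rw [← add_assoc ((a-1)*m), r_x hβ (by omega) (time_ge hm ha), dl_self (by omega) (by omega)]
      ring
    · refine (((((Ap.const 1).add ((Ap.const 2).mul s0)).mul i2).add
        (((Ap.const (2*(1+β))).add (s0.mul (Ap.const (2*(1+β)+1)))).mul i1)).add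
        (Ap.const ((1+β)*(1+β)))).congr (fun a ha => ?_) (by push_cast; ring)
      rw [← add_assoc ((a-1)*m), r_xx hβ (by omega) (time_ge hm ha), dl_self (by omega) (by omega)]
      ring

lemma end_time (m : ℕ) {a : ℕ} (ha : 1 ≤ a) : (a-1)*m+m = a*m := by
  obtain ⟨a, rfl⟩ : ∃ k, a = k+1 := ⟨a-1, by omega⟩
  simp; ring

lemma Qa_ap (hβ : 0 < β) (hm : 1 ≤ m) : Ap (Qa β m) ((m*(1+β))*(m*(1+β)) + m*(1+β)) := by
  obtain ⟨h1, h2⟩ := blockA hβ hm m le_rfl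
  refine (h2.add h1).congr (fun a ha => ?_) rfl
  unfold Qa
  rw [end_time m (by omega), es_add (Nat.mul_pos (by omega) hm)]

lemma blockB (hβ : 0 < β) (hm : 1 ≤ m) (k : ℕ) (hk : k ≤ m) :
    ∃ q w z r : ℕ → ℝ, Ap q 1 ∧ Ap (fun b => b * w b) (k / ((2+β)*m)) ∧ Ap z (k*(1+β)) ∧
      Ap (fun b => b * r b) ((1+β)*(k*k) / ((2+β)*m)) ∧
    ∀ a b c : ℕ, 1 ≤ a → a < b → b < c →
      es β m a b c ((b-1)*m+k) (fun x _ _ _ _ => x*x+x) =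
        q b * es β m a b c ((b-1)*m) (fun x _ _ _ _ => x*x+x) ∧
      es β m a b c ((b-1)*m+k) (fun x _ Y _ _ => Y*x) =
        w b * es β m a b c ((b-1)*m) (fun x _ _ _ _ => x*x+x) ∧
      es β m a b c ((b-1)*m+k) (fun x y _ _ _ => (x*x+x)*y) =
        z b * es β m a b c ((b-1)*m) (fun x _ _ _ _ => x*x+x) ∧
      es β m a b c ((b-1)*m+k) (fun x y Y _ _ => Y*x*y) =
        r b * es β m a b c ((b-1)*m) (fun x _ _ _ _ => x*x+x) := by
  induction k with
  | zero =>
    refine ⟨fun _ => 1, fun _ => 0, fun _ => 0, fun _ => 0, Ap.const 1,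
      (Ap.const 0).congr (by simp) (by simp), (Ap.const 0).congr (by simp) (by simp),
      (Ap.const 0).congr (by simp) (by simp), ?_⟩
    intro a b c h1 h2 h3
    have ht : 1 ≤ (b-1)*m := time_ge (k := 0) hm (by omega)
    have hz : ∀ φ, es β m a b c ((b-1)*m) φ = _ :=
      es_before_b hβ (by omega : a ≠ b) hm (by omega : 2 ≤ b) (by omega : b ≤ c) ht le_rfl
    have h0 := es_const hβ (by omega : a ≠ b) ht (c := c) (m := m) 0
    refine ⟨by simp, ?_, ?_, ?_⟩
    · rw [add_zero, hz]; simp [h0]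
    · rw [add_zero, hz]; simp [h0]
    · rw [add_zero, hz]; simp [h0]
  | succ k ih =>
    obtain ⟨q, w, z, r, aq, aw, az, ar, h⟩ := ih (by omega)
    have s0 := sg_ap0 hβ hm k
    have s1 := sg_ap hβ hm k
    refine ⟨fun b => (1 + 2 * sg β ((b-1)*m+k)) * q b,
      fun b => (1 + sg β ((b-1)*m+k)) * w b + sg β ((b-1)*m+k) * q b,
      fun b => (1 + 3 * sg β ((b-1)*m+k)) * z b + (1+β)*(1+2*sg β ((b-1)*m+k)) * q b,
      fun b => (1 + 2 * sg β ((b-1)*m+k)) * r b + (1+β)*(1+sg β ((b-1)*m+k)) * w b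
        + sg β ((b-1)*m+k) * z b + (1+β)* sg β ((b-1)*m+k) * q b, ?_, ?_, ?_, ?_, ?_⟩
    · exact (((Ap.const 1).add ((Ap.const 2).mul s0)).mul aq).congr (by simp) (by simp)
    · exact ((((Ap.const 1).add s0).mul aw).add (s1.mul aq)).congr (fun b _ => by ring)
        (by push_cast; ring)
    · exact ((((Ap.const 1).add ((Ap.const 3).mul s0)).mul az).add
        (((Ap.const (1+β)).mul ((Ap.const 1).add ((Ap.const 2).mul s0))).mul aq)).congr (fun b _ => by ring)
        (by push_cast; ring)
    · exact ((((((Ap.const 1).add ((Ap.const 2).mul s0)).mul ar).add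
        (((Ap.const (1+β)).mul ((Ap.const 1).add s0)).mul aw)).add (s1.mul az)).add
        (((Ap.const (1+β)).mul s1).mul aq)).congr (fun b _ => by ring) (by push_cast; ring)
    · intro a b c h1 h2 h3
      have ht : 1 ≤ (b-1)*m+k := time_ge hm (by omega)
      have hA : dl m a ((b-1)*m+k) = 0 := dl_ne (by omega) (by omega) (by omega)
      have hB : dl m b ((b-1)*m+k) = 1 := dl_self (by omega) (by omega)
      obtain ⟨e1, e2, e3, e4⟩ := h a b c h1 h2 h3
      have hab : a ≠ b := by omega
      rw [← add_assoc, r_q hβ hab ht hA, r_w hβ hab ht hA hB, r_z hβ hab ht hA hB,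
        r_r hβ hab ht hA hB, e1, e2, e3, e4]
      refine ⟨?_, ?_, ?_, ?_⟩ <;> ring

lemma blockC (hβ : 0 < β) (hm : 1 ≤ m) (k : ℕ) (hk : k ≤ m) :
    ∃ p w z r : ℕ → ℝ, Ap p 1 ∧ Ap (fun b => b * w b) (k / ((2+β)*m)) ∧
      Ap (fun b => b * z b) (k / ((2+β)*m)) ∧
      Ap (fun b => (b*b) * r b) (k*(k-1) / (((2+β)*m)*((2+β)*m))) ∧
    ∀ a b c : ℕ, 1 ≤ a → a < b → b < c →
      es β m a b c ((c-1)*m+k) (fun x y Y _ _ => Y*x*y) =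
        p c * es β m a b c ((c-1)*m) (fun x y Y _ _ => Y*x*y) ∧
      es β m a b c ((c-1)*m+k) (fun _ y Y u _ => Y*u*y) =
        w c * es β m a b c ((c-1)*m) (fun x y Y _ _ => Y*x*y) ∧
      es β m a b c ((c-1)*m+k) (fun x _ Y _ v => Y*x*v) =
        z c * es β m a b c ((c-1)*m) (fun x y Y _ _ => Y*x*y) ∧
      es β m a b c ((c-1)*m+k) (fun _ _ Y u v => Y*u*v) =
        r c * es β m a b c ((c-1)*m) (fun x y Y _ _ => Y*x*y) := by
  induction k with
  | zero =>
    refine ⟨fun _ => 1, fun _ => 0, fun _ => 0, fun _ => 0, Ap.const 1,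
      (Ap.const 0).congr (by simp) (by simp), (Ap.const 0).congr (by simp) (by simp),
      (Ap.const 0).congr (by simp) (by simp), ?_⟩
    intro a b c h1 h2 h3
    have ht : 1 ≤ (c-1)*m := time_ge (k := 0) hm (by omega)
    have hz : ∀ φ, es β m a b c ((c-1)*m) φ = _ :=
      es_before_c hβ (by omega : a ≠ b) hm (by omega : 2 ≤ c) ht le_rfl
    have h0 := es_const hβ (by omega : a ≠ b) ht (c := c) (m := m) 0
    refine ⟨by simp, ?_, ?_, ?_⟩
    · rw [add_zero, hz]; simp [h0]
    · rw [add_zero, hz]; simp [h0]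
    · rw [add_zero, hz]; simp [h0]
  | succ k ih =>
    obtain ⟨q, w, z, r, aq, aw, az, ar, h⟩ := ih (by omega)
    have s0 := sg_ap0 hβ hm k
    have s1 := sg_ap hβ hm k
    refine ⟨fun b => (1 + 2 * sg β ((b-1)*m+k)) * q b,
      fun b => (1 + sg β ((b-1)*m+k)) * w b + sg β ((b-1)*m+k) * q b,
      fun b => (1 + sg β ((b-1)*m+k)) * z b + sg β ((b-1)*m+k) * q b,
      fun b => r b + sg β ((b-1)*m+k) * w b + sg β ((b-1)*m+k) * z b, ?_, ?_, ?_, ?_, ?_⟩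
    · exact (((Ap.const 1).add ((Ap.const 2).mul s0)).mul aq).congr (by simp) (by simp)
    · exact ((((Ap.const 1).add s0).mul aw).add (s1.mul aq)).congr (fun b _ => by ring)
        (by push_cast; ring)
    · exact ((((Ap.const 1).add s0).mul az).add (s1.mul aq)).congr (fun b _ => by ring)
        (by push_cast; ring)
    · have hm' : (m:ℝ) ≠ 0 := by positivity
      exact ((ar.add (s1.mul aw)).add (s1.mul az)).congr (fun b _ => by ring)
        (by push_cast; field_simp; ring)
    · intro a b c h1 h2 h3
      have ht : 1 ≤ (c-1)*m+k := time_ge hm (by omega)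
      have hA : dl m a ((c-1)*m+k) = 0 := dl_ne (by omega) (by omega) (by omega)
      have hB : dl m b ((c-1)*m+k) = 0 := dl_ne (by omega) (by omega) (by omega)
      have hC : dl m c ((c-1)*m+k) = 1 := dl_self (by omega) (by omega)
      obtain ⟨e1, e2, e3, e4⟩ := h a b c h1 h2 h3
      have hab : a ≠ b := by omega
      rw [← add_assoc, r_r0 hβ hab ht hA hB, r_u hβ hab ht hB hC, r_v hβ hab ht hA hB hC,
        r_uv hβ hab ht hB hC, e1, e2, e3, e4]
      refine ⟨?_, ?_, ?_, ?_⟩ <;> ring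

noncomputable def Rp (β : ℝ) (u v : ℕ) : ℝ := ∏ t ∈ Finset.Ico u v, (1 + 2 * sg β t)

lemma mid_q (hβ : 0 < β) (hm : 1 ≤ m) {a b c v : ℕ} (ha : 1 ≤ a) (hab : a ≠ b) (hv : a*m ≤ v) :
    es β m a b c v (fun x _ _ _ _ => x*x+x) = Rp β (a*m) v * Qa β m a := by
  induction v, hv using Nat.le_induction with
  | base => rw [Qa_eq hβ hm ha hab]; simp [Rp]
  | succ v hv ih =>
    have ht : 1 ≤ a*m := Nat.mul_pos ha hm
    rw [r_q hβ hab (by omega) (dl_gt hm hv), ih, Rp, Rp, Finset.prod_Ico_succ_top hv]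
    ring

lemma mid_r (hβ : 0 < β) (hm : 1 ≤ m) {a b c v : ℕ} (ha : 1 ≤ a) (hab : a < b) (hv : b*m ≤ v) :
    es β m a b c v (fun x y Y _ _ => Y*x*y) = Rp β (b*m) v *
      es β m a b c (b*m) (fun x y Y _ _ => Y*x*y) := by
  induction v, hv using Nat.le_induction with
  | base => simp [Rp]
  | succ v hv ih =>
    have ht : 1 ≤ b*m := Nat.mul_pos (by omega) hm
    have : a * m ≤ b * m := Nat.mul_le_mul_right _ hab.le
    rw [r_r0 hβ (by omega) (by omega) (dl_gt hm (by omega)) (dl_gt hm hv), ih, Rp, Rp, Finset.prod_Ico_succ_top hv]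
    ring

lemma after_c (hβ : 0 < β) (hm : 1 ≤ m) {a b c v : ℕ} (ha : 1 ≤ a) (hab : a < b) (hbc : b < c) (hv : c*m ≤ v) :
    es β m a b c v (fun _ _ Y u v => Y*u*v) = es β m a b c (c*m) (fun _ _ Y u v => Y*u*v) := by
  induction v, hv using Nat.le_induction with
  | base => rfl
  | succ v hv ih =>
    have ht : 1 ≤ c*m := Nat.mul_pos (by omega) hm
    have : b * m ≤ c * m := Nat.mul_le_mul_right _ hbc.le
    rw [r_uv0 hβ (by omega) (by omega) (dl_gt hm (by omega)) (dl_gt hm hv), ih]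

lemma exact_formula (hβ : 0 < β) (hm : 1 ≤ m) : ∃ h g : ℕ → ℝ,
    Ap (fun b => b * h b) ((1+β)*(m*m) / ((2+β)*m)) ∧
    Ap (fun b => (b*b) * g b) (m*(m-1) / (((2+β)*m)*((2+β)*m))) ∧
    ∀ a b c N : ℕ, 1 ≤ a → a < b → b < c → c*m ≤ N →
      es β m a b c N (fun _ _ Y u v => Y*u*v) =
        Qa β m a * Rp β (a*m) ((b-1)*m) * h b * Rp β (b*m) ((c-1)*m) * g c := by
  obtain ⟨_, _, _, h, _, _, _, ah, eh⟩ := blockB hβ hm m le_rfl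
  obtain ⟨_, _, _, g, _, _, _, ag, eg⟩ := blockC hβ hm m le_rfl
  refine ⟨h, g, ah, ag, ?_⟩
  intro a b c N h1 h2 h3 hN
  have e1 := (eh a b c h1 h2 h3).2.2.2
  have e2 := (eg a b c h1 h2 h3).2.2.2
  rw [end_time m (by omega)] at e1 e2
  rw [after_c hβ hm h1 h2 h3 hN, e2, mid_r hβ hm h1 h2 (Nat.mul_le_mul_right _ (by omega)), e1,
    mid_q hβ hm h1 (by omega) (Nat.mul_le_mul_right _ (by omega))]
  ring

end blocks


/-! ### Asymptotics of the products -/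

lemma step_low {p : ℝ} (hp0 : 0 ≤ p) (hp1 : p ≤ 1) {v : ℕ} (hv : 1 ≤ v) :
    ((v+1 : ℕ) : ℝ)^p ≤ (v:ℝ)^p * (1 + p * (1/v)) := by
  have hv' : (0:ℝ) < v := by exact_mod_cast hv
  have h1 : ((v+1 : ℕ) : ℝ) = v * (1 + 1/v) := by push_cast; field_simp
  rw [h1, Real.mul_rpow hv'.le (by positivity)]
  gcongr
  have h2 : (0:ℝ) ≤ 1/v := by positivity
  exact rpow_one_add_le_one_add_mul_self (by linarith) hp0 hp1

lemma step_up {p : ℝ} (hp0 : 0 ≤ p) (hp1 : p ≤ 1) {v : ℕ} (hv : 1 ≤ v) :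
    ((v:ℝ) - 1)^p ≤ (v:ℝ)^p * (1 - p * (1/v)) := by
  have hv' : (1:ℝ) ≤ v := by exact_mod_cast hv
  have hv0 : (0:ℝ) < v := by linarith
  have h2 : 1 / (v:ℝ) ≤ 1 := by rw [div_le_one hv0]; exact hv'
  have h1 : (v:ℝ) - 1 = v * (1 + -(1/v)) := by field_simp; ring
  rw [h1, Real.mul_rpow hv0.le (by linarith)]
  have := rpow_one_add_le_one_add_mul_self (s := -(1/(v:ℝ))) (p := p) (by linarith) hp0 hp1
  have h3 : 1 - p * (1/(v:ℝ)) = 1 + p * -(1/v) := by ring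
  rw [h3]
  gcongr

noncomputable def pp (β : ℝ) : ℝ := 2 / (2+β)

section prods
variable {β : ℝ}

lemma pp_pos (hβ : 0 < β) : 0 < pp β := by unfold pp; positivity
lemma pp_lt (hβ : 0 < β) : pp β < 1 := by unfold pp; rw [div_lt_one (by positivity)]; linarith

lemma fac_ge (hβ : 0 < β) {v : ℕ} (hv : 1 ≤ v) : 1 + pp β * (1/v) ≤ 1 + 2 * sg β v := by
  have h := den_pos hβ hv
  have hv0 : (0:ℝ) < v := by exact_mod_cast hv
  have : pp β * (1/v) = 2 * (1 / ((2+β)*v)) := by unfold pp; field_simp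
  rw [this]
  unfold sg
  gcongr
  linarith

lemma fac_mul (hβ : 0 < β) {v : ℕ} (hv : 1 ≤ v) : (1 + 2 * sg β v) * (1 - pp β * (1/v)) = 1 := by
  have h := den_pos hβ hv
  have hv0 : (0:ℝ) < v := by exact_mod_cast hv
  unfold sg pp
  field_simp
  ring

lemma Rp_low (hβ : 0 < β) {u v : ℕ} (hu : 1 ≤ u) (huv : u ≤ v) : (v:ℝ)^(pp β) ≤ Rp β u v * (u:ℝ)^(pp β) := by
  induction v, huv using Nat.le_induction with
  | base => simp [Rp]
  | succ v hv ih =>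
    have hv1 : 1 ≤ v := by omega
    have hs := sg_pos hβ hv1
    rw [Rp, Finset.prod_Ico_succ_top hv]
    change _ ≤ (Rp β u v * _) * _
    calc _ ≤ (v:ℝ)^(pp β) * (1 + pp β * (1/v)) := step_low (pp_pos hβ).le (pp_lt hβ).le hv1
      _ ≤ (Rp β u v * (u:ℝ)^(pp β)) * (1 + 2 * sg β v) := by
        have h0 := pp_pos hβ
        have h1 : (0:ℝ) ≤ (v:ℝ)^(pp β) := by positivity
        exact mul_le_mul ih (fac_ge hβ hv1) (by positivity) (h1.trans ih)
      _ = _ := by ring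

lemma Rp_nonneg (hβ : 0 < β) {u v : ℕ} (hu : 1 ≤ u) : 0 ≤ Rp β u v := by
  apply Finset.prod_nonneg
  intro t ht
  rw [Finset.mem_Ico] at ht
  have := sg_pos hβ (by omega : 1 ≤ t)
  positivity

lemma Rp_up (hβ : 0 < β) {u v : ℕ} (hu : 2 ≤ u) (huv : u ≤ v) :
    Rp β u v * ((u:ℝ)-1)^(pp β) ≤ ((v:ℝ)-1)^(pp β) := by
  induction v, huv using Nat.le_induction with
  | base => simp [Rp]
  | succ v hv ih =>
    have hv1 : 1 ≤ v := by omega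
    have hs := sg_pos hβ hv1
    rw [Rp, Finset.prod_Ico_succ_top hv]
    change (Rp β u v * _) * _ ≤ _
    calc _ = (Rp β u v * ((u:ℝ)-1)^(pp β)) * (1 + 2 * sg β v) := by ring
      _ ≤ ((v:ℝ)^(pp β) * (1 - pp β * (1/v))) * (1 + 2 * sg β v) := by
        exact mul_le_mul_of_nonneg_right (ih.trans (step_up (pp_pos hβ).le (pp_lt hβ).le hv1)) (by positivity)
      _ = (v:ℝ)^(pp β) * ((1 + 2 * sg β v) * (1 - pp β * (1/v))) := by ring
      _ = _ := by rw [fac_mul hβ hv1]; push_cast; ring_nf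

lemma Rp_upper (hβ : 0 < β) {u v : ℕ} (hu : 1 ≤ u) (huv : u ≤ v) :
    Rp β u v * (u:ℝ)^(pp β) ≤ (1 + (2+2/β) / u) * (v:ℝ)^(pp β) := by
  have h0 := pp_pos hβ
  have hR := Rp_nonneg hβ (v := v) hu
  by_cases hu2 : 2 ≤ u
  · have hu' : (2:ℝ) ≤ u := by exact_mod_cast hu2
    have hv' : (u:ℝ) ≤ v := by exact_mod_cast huv
    have h1 := Rp_up hβ hu2 huv
    have h2 : (u:ℝ)^(pp β) ≤ (1 + 2/u) * ((u:ℝ)-1)^(pp β) := by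
      have := step_low h0.le (pp_lt hβ).le (v := u-1) (by omega)
      rw [show u - 1 + 1 = u by omega, Nat.cast_sub (by omega)] at this
      refine this.trans ?_
      rw [mul_comm]
      push_cast
      have hu0 : (0:ℝ) < (u:ℝ) - 1 := by linarith
      gcongr
      calc pp β * (1/((u:ℝ)-1)) ≤ 1 * (1/((u:ℝ)-1)) := by gcongr; exact (pp_lt hβ).le
        _ ≤ 2/u := by rw [one_mul, div_le_div_iff₀ hu0 (by linarith)]; linarith
    calc _ ≤ Rp β u v * ((1 + 2/u) * ((u:ℝ)-1)^(pp β)) := by gcongr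
      _ = (1 + 2/u) * (Rp β u v * ((u:ℝ)-1)^(pp β)) := by ring
      _ ≤ (1 + (2+2/β)/u) * (v:ℝ)^(pp β) := by
        have : (0:ℝ) ≤ 2/β := by positivity
        have h5 : Rp β u v * ((u:ℝ)-1)^(pp β) ≤ (v:ℝ)^(pp β) := by
          refine h1.trans ?_
          apply Real.rpow_le_rpow <;> linarith
        have h6 : 2/(u:ℝ) ≤ (2+2/β)/u := by gcongr; linarith
        refine (mul_le_mul_of_nonneg_left h5 (by positivity)).trans ?_
        exact mul_le_mul_of_nonneg_right (by linarith) (by positivity)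
  · obtain rfl : u = 1 := by omega
    have hc : (0:ℝ) ≤ 2/β := by positivity
    simp only [Nat.cast_one, Real.one_rpow, mul_one, div_one]
    have hv1 : (1:ℝ) ≤ v := by exact_mod_cast huv
    have hvp : 1 ≤ (v:ℝ)^(pp β) := Real.one_le_rpow hv1 h0.le
    by_cases hv : v = 1
    · subst hv; simp [Rp]; linarith
    · have h1 := Rp_up hβ le_rfl (by omega : 2 ≤ v)
      rw [Rp, Finset.prod_eq_prod_Ico_succ_bot (by omega)]
      change (1 + 2 * sg β 1) * Rp β 2 v ≤ _
      have h2 : Rp β 2 v ≤ (v:ℝ)^(pp β) := by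
        have e : ((2:ℕ):ℝ) - 1 = 1 := by norm_num
        rw [e, Real.one_rpow, mul_one] at h1
        refine h1.trans ?_
        apply Real.rpow_le_rpow <;> linarith
      have h3 : 1 + 2 * sg β 1 = 1 + 2/β := by unfold sg; push_cast; ring_nf
      rw [h3]
      have : 0 ≤ Rp β 2 v := Rp_nonneg hβ (by norm_num)
      gcongr
      linarith

/-- normalised block product -/
lemma Rp_blk (hβ : 0 < β) {m : ℕ} (hm : 1 ≤ m) : ∃ C : ℝ, 0 ≤ C ∧ ∀ a b : ℕ, 1 ≤ a → a < b →
    |Rp β (a*m) ((b-1)*m) * ((a:ℝ)^(pp β) / (b:ℝ)^(pp β)) - 1| ≤ C / a := by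
  refine ⟨2+2/β+1, by positivity, ?_⟩
  intro a b ha hab
  have h0 := pp_pos hβ
  have hle : a*m ≤ (b-1)*m := Nat.mul_le_mul_right _ (by omega)
  have hu : 1 ≤ a*m := Nat.mul_pos ha hm
  have l := Rp_low hβ hu hle
  have u := Rp_upper hβ hu hle
  have hR := Rp_nonneg hβ (v := (b-1)*m) hu
  have ha' : (1:ℝ) ≤ a := by exact_mod_cast ha
  have hb' : (a:ℝ)+1 ≤ b := by exact_mod_cast hab
  have hm' : (1:ℝ) ≤ m := by exact_mod_cast hm
  push_cast [Nat.cast_sub (by omega : 1 ≤ b)] at l u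
  rw [Real.mul_rpow (by linarith) (by linarith), Real.mul_rpow (by linarith) (by linarith), ← mul_assoc] at l u
  set M := (m:ℝ)^(pp β) with hM
  have hMp : 0 < M := by positivity
  have l' : ((b:ℝ)-1)^(pp β) ≤ Rp β (a*m) ((b-1)*m) * (a:ℝ)^(pp β) := le_of_mul_le_mul_right l hMp
  have u' : Rp β (a*m) ((b-1)*m) * (a:ℝ)^(pp β) ≤ (1 + (2+2/β) / (a*m)) * ((b:ℝ)-1)^(pp β) := by
    refine le_of_mul_le_mul_right ?_ hMp
    rw [mul_assoc (1 + _) _ M]; exact u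
  have hbp : 0 < (b:ℝ)^(pp β) := Real.rpow_pos_of_pos (by linarith) _
  have hx : ((b:ℝ)-1)^(pp β) ≤ (b:ℝ)^(pp β) := Real.rpow_le_rpow (by linarith) (by linarith) h0.le
  have hy : (1 - 1/a) * (b:ℝ)^(pp β) ≤ ((b:ℝ)-1)^(pp β) := by
    have hbb : (0:ℝ) < b := by linarith
    have e : (b:ℝ) - 1 = b * (1 - 1/b) := by field_simp
    have h1b : 1/(b:ℝ) ≤ 1 := by rw [div_le_one hbb]; linarith
    rw [e, Real.mul_rpow (by linarith) (by linarith), mul_comm]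
    gcongr
    have h2 : 1 - 1/(b:ℝ) ≤ (1 - 1/(b:ℝ))^(pp β) := by
      conv_lhs => rw [← Real.rpow_one (1 - 1/(b:ℝ))]
      apply Real.rpow_le_rpow_of_exponent_ge' (by linarith) _ h0.le (pp_lt hβ).le
      have : 0 ≤ 1/(b:ℝ) := by positivity
      linarith
    refine le_trans ?_ h2
    have : 1/(b:ℝ) ≤ 1/a := by apply one_div_le_one_div_of_le <;> linarith
    linarith
  rw [← mul_div_assoc]
  have hc : (0:ℝ) ≤ 2/β := by positivity
  rw [abs_le]
  constructor
  · have : 1 - 1/(a:ℝ) ≤ Rp β (a*m) ((b-1)*m) * (a:ℝ)^(pp β) / (b:ℝ)^(pp β) := by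
      rw [le_div_iff₀ hbp]; exact hy.trans l'
    have h3 : 1/(a:ℝ) ≤ (2+2/β+1)/a := by gcongr; linarith
    linarith
  · have : Rp β (a*m) ((b-1)*m) * (a:ℝ)^(pp β) / (b:ℝ)^(pp β) ≤ 1 + (2+2/β)/a := by
      rw [div_le_iff₀ hbp]
      refine u'.trans ?_
      have h7 : (2+2/β)/((a:ℝ)*m) ≤ (2+2/β)/a := by gcongr; nlinarith
      refine (mul_le_mul_of_nonneg_left hx (by positivity)).trans ?_
      exact mul_le_mul_of_nonneg_right (by linarith) hbp.le
    have h3 : (2+2/β)/(a:ℝ) ≤ (2+2/β+1)/a := div_le_div_of_nonneg_right (by linarith) (by linarith)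
    linarith

end prods

def Ap3 (x : ℕ → ℕ → ℕ → ℝ) (k : ℝ) : Prop := ∃ C : ℝ, 0 ≤ C ∧ ∀ a b c : ℕ, 1 ≤ a → a < b → b < c →
  |x a b c - k| ≤ C / a

lemma Ap3.mul {x y : ℕ → ℕ → ℕ → ℝ} {k l : ℝ} (hx : Ap3 x k) (hy : Ap3 y l) :
    Ap3 (fun a b c => x a b c * y a b c) (k * l) := by
  obtain ⟨C, hC, hx⟩ := hx
  obtain ⟨D, hD, hy⟩ := hy
  refine ⟨C * D + |k| * D + C * |l|, by positivity, fun a b c h1 h2 h3 => ?_⟩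
  have hb1 : (1 : ℝ) ≤ a := by exact_mod_cast h1
  have hx := hx a b c h1 h2 h3
  have hy := hy a b c h1 h2 h3
  beta_reduce
  set X := x a b c
  set Y := y a b c
  have : X * Y - k * l = (X - k) * (Y - l) + k * (Y - l) + (X - k) * l := by ring
  rw [this]
  have hD' : D / a ≤ D := div_le_self hD hb1
  calc _ ≤ |X - k| * |Y - l| + |k| * |Y - l| + |X - k| * |l| := by
        refine (abs_add_le _ _).trans ?_
        rw [abs_mul (X - k) l]
        gcongr
        refine (abs_add_le _ _).trans ?_
        rw [abs_mul, abs_mul]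
    _ ≤ C / a * D + |k| * (D / a) + C / a * |l| := by
        gcongr
        exact hy.trans hD'
    _ = _ := by ring

lemma Ap.a3 {x : ℕ → ℝ} {k : ℝ} (h : Ap x k) : Ap3 (fun a _ _ => x a) k := by
  obtain ⟨C, hC, h⟩ := h
  refine ⟨C + |x 1 - k|, by positivity, fun a b c h1 _ _ => ?_⟩
  by_cases ha : a = 1
  · subst ha; simp [hC]
  · refine (h a (by omega)).trans ?_
    gcongr
    linarith [abs_nonneg (x 1 - k)]

lemma Ap.b3 {x : ℕ → ℝ} {k : ℝ} (h : Ap x k) : Ap3 (fun _ b _ => x b) k := by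
  obtain ⟨C, hC, h⟩ := h
  refine ⟨C, hC, fun a b c h1 h2 _ => (h b (by omega)).trans ?_⟩
  have : (0:ℝ) < a := by exact_mod_cast h1
  gcongr

lemma Ap.c3 {x : ℕ → ℝ} {k : ℝ} (h : Ap x k) : Ap3 (fun _ _ c => x c) k := by
  obtain ⟨C, hC, h⟩ := h
  refine ⟨C, hC, fun a b c h1 h2 h3 => (h c (by omega)).trans ?_⟩
  have : (0:ℝ) < a := by exact_mod_cast h1
  gcongr
  omega

lemma T_asymp {β : ℝ} (hβ : 0 < β) {m : ℕ} (hm : 1 ≤ m) : ∃ x : ℕ → ℕ → ℕ → ℝ,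
    Ap3 x (((m*(1+β))*(m*(1+β)) + m*(1+β)) * ((1+β)*(m*m) / ((2+β)*m)) *
      (m*(m-1) / (((2+β)*m)*((2+β)*m)))) ∧
    ∀ a b c N : ℕ, 1 ≤ a → a < b → b < c → c*m ≤ N →
      es β m a b c N (fun _ _ Y u v => Y*u*v) =
       (c:ℝ)⁻¹ * ((c:ℝ)^(-(1 - pp β)) * ((b:ℝ)⁻¹ * ((a:ℝ)⁻¹ * ((a:ℝ)^(1 - pp β) * x a b c)))) := by
  obtain ⟨h, g, ah, ag, e⟩ := exact_formula hβ hm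
  have aq := Qa_ap hβ hm
  have r1 : Ap3 (fun a b _ => Rp β (a*m) ((b-1)*m) * ((a:ℝ)^(pp β) / (b:ℝ)^(pp β))) 1 := by
    obtain ⟨C, hC, h⟩ := Rp_blk hβ hm
    exact ⟨C, hC, fun a b c h1 h2 _ => h a b h1 h2⟩
  have r2 : Ap3 (fun _ b c => Rp β (b*m) ((c-1)*m) * ((b:ℝ)^(pp β) / (c:ℝ)^(pp β))) 1 := by
    obtain ⟨C, hC, h⟩ := Rp_blk hβ hm
    refine ⟨C, hC, fun a b c h1 h2 h3 => (h b c (by omega) h3).trans ?_⟩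
    have : (0:ℝ) < a := by exact_mod_cast h1
    gcongr
  have hh := ((((aq.a3).mul r1).mul ah.b3).mul r2).mul ag.c3
  rw [mul_one, mul_one] at hh
  refine ⟨_, hh, ?_⟩
  · intro a b c N h1 h2 h3 h4
    rw [e a b c N h1 h2 h3 h4]
    have ha : (0:ℝ) < a := by exact_mod_cast h1
    have hb : (0:ℝ) < b := by exact_mod_cast (by omega : 0 < b)
    have hc : (0:ℝ) < c := by exact_mod_cast (by omega : 0 < c)
    rw [neg_sub, Real.rpow_sub ha, Real.rpow_sub hc, Real.rpow_one, Real.rpow_one]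
    have := Real.rpow_pos_of_pos ha (pp β)
    have := Real.rpow_pos_of_pos hb (pp β)
    have := Real.rpow_pos_of_pos hc (pp β)
    field_simp


/-! ### Summation -/

lemma sum_pow {r : ℝ} (hr0 : 0 < r) (hr1 : r ≤ 1) {b : ℕ} (hb : 1 ≤ b) :
    (b:ℝ)^r - 1 ≤ r * ∑ a ∈ Finset.Ico 1 b, (a:ℝ)⁻¹ * (a:ℝ)^r ∧
    r * ∑ a ∈ Finset.Ico 1 b, (a:ℝ)⁻¹ * (a:ℝ)^r ≤ ((b:ℝ)-1)^r := by
  induction b, hb using Nat.le_induction with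
  | base => simp [hr0.ne']
  | succ b hb ih =>
    rw [Finset.sum_Ico_succ_top hb]
    have h1 := step_low hr0.le hr1 hb
    have h2 := step_up hr0.le hr1 hb
    have e : (b:ℝ)^r * (1 + r * (1/b)) = (b:ℝ)^r + r * ((b:ℝ)⁻¹ * (b:ℝ)^r) := by ring
    have e' : (b:ℝ)^r * (1 - r * (1/b)) = (b:ℝ)^r - r * ((b:ℝ)⁻¹ * (b:ℝ)^r) := by ring
    rw [e] at h1
    rw [e'] at h2
    have e3 : (((b+1:ℕ):ℝ) - 1) = b := by push_cast; ring
    rw [e3, mul_add]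
    constructor <;> linarith [ih.1, ih.2]

lemma wsum {q κ C : ℝ} (hq0 : 0 < q) (hq1 : q ≤ 1) (hC : 0 ≤ C) (G : ℕ → ℝ) {c : ℕ} (hc : 1 ≤ c)
    (hG : ∀ b, 1 ≤ b → b < c → |G b - κ * (b:ℝ)^q| ≤ C * (b:ℝ)^(q/2)) :
    |∑ b ∈ Finset.Ico 1 c, (b:ℝ)⁻¹ * G b - (κ/q) * (c:ℝ)^q| ≤ (|κ|/q + C * (2/q)) * (c:ℝ)^(q/2) := by
  have hc1 : (1:ℝ) ≤ c := by exact_mod_cast hc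
  obtain ⟨l1, u1⟩ := sum_pow hq0 hq1 hc
  obtain ⟨_, u2⟩ := sum_pow (by positivity : 0 < q/2) (by linarith) hc
  set A := ∑ a ∈ Finset.Ico 1 c, (a:ℝ)⁻¹ * (a:ℝ)^q
  set B := ∑ a ∈ Finset.Ico 1 c, (a:ℝ)⁻¹ * (a:ℝ)^(q/2)
  have hm : ∀ r : ℝ, 0 < r → ((c:ℝ)-1)^r ≤ (c:ℝ)^r := fun r hr =>
    Real.rpow_le_rpow (by linarith) (by linarith) hr.le
  have h1 := hm q hq0
  have h2 := hm (q/2) (by positivity)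
  have hone : 1 ≤ (c:ℝ)^(q/2) := Real.one_le_rpow hc1 (by positivity)
  have eA : |A - (c:ℝ)^q / q| ≤ 1/q := by
    have : A - (c:ℝ)^q/q = (q * A - (c:ℝ)^q)/q := by field_simp
    rw [this, abs_div, abs_of_pos hq0]
    gcongr
    rw [abs_le]; constructor <;> linarith
  have eB : B ≤ (2/q) * (c:ℝ)^(q/2) := by
    have : B = (2/q) * (q/2 * B) := by field_simp
    rw [this]
    gcongr
    linarith
  have e1 : |∑ b ∈ Finset.Ico 1 c, (b:ℝ)⁻¹ * G b - κ * A| ≤ C * B := by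
    rw [Finset.mul_sum, ← Finset.sum_sub_distrib, Finset.mul_sum]
    refine (Finset.abs_sum_le_sum_abs _ _).trans (Finset.sum_le_sum ?_)
    intro b hb
    rw [Finset.mem_Ico] at hb
    have : (b:ℝ)⁻¹ * G b - κ * ((b:ℝ)⁻¹ * (b:ℝ)^q) = (b:ℝ)⁻¹ * (G b - κ * (b:ℝ)^q) := by ring
    rw [this, abs_mul, abs_of_nonneg (by positivity : (0:ℝ) ≤ (b:ℝ)⁻¹)]
    have := hG b hb.1 hb.2
    calc _ ≤ (b:ℝ)⁻¹ * (C * (b:ℝ)^(q/2)) := by gcongr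
      _ = _ := by ring
  have e2 : ∑ b ∈ Finset.Ico 1 c, (b:ℝ)⁻¹ * G b - (κ/q) * (c:ℝ)^q
      = (∑ b ∈ Finset.Ico 1 c, (b:ℝ)⁻¹ * G b - κ * A) + κ * (A - (c:ℝ)^q/q) := by ring
  rw [e2]
  calc _ ≤ C * B + |κ| * (1/q) := by
        refine (abs_add_le _ _).trans ?_
        rw [abs_mul]
        gcongr
    _ ≤ C * ((2/q) * (c:ℝ)^(q/2)) + |κ| * (1/q) * (c:ℝ)^(q/2) := by
        have h9 : |κ| * (1/q) ≤ |κ| * (1/q) * (c:ℝ)^(q/2) :=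
          le_mul_of_one_le_right (by positivity) hone
        gcongr
    _ = _ := by ring

lemma outer {q : ℝ} (hq0 : 0 < q) : ∃ D : ℝ, 0 ≤ D ∧ ∀ n : ℕ,
    ∑ c ∈ Finset.Icc 1 n, (c:ℝ)⁻¹ * ((c:ℝ)^(-q) * (c:ℝ)^(q/2)) ≤ D := by
  have hs : Summable (fun c : ℕ => (c:ℝ)^(-(1+q/2))) := Real.summable_nat_rpow.mpr (by linarith)
  refine ⟨∑' c : ℕ, (c:ℝ)^(-(1+q/2)), tsum_nonneg (fun c => by positivity), fun n => ?_⟩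
  refine le_trans (le_of_eq ?_) (hs.sum_le_tsum (Finset.Icc 1 n) (fun c _ => by positivity))
  apply Finset.sum_congr rfl
  intro c hc
  rw [Finset.mem_Icc] at hc
  have hc0 : (0:ℝ) < c := by exact_mod_cast (by omega : 0 < c)
  rw [← Real.rpow_neg_one, ← Real.rpow_add hc0, ← Real.rpow_add hc0]
  congr 1; ring

lemma harm (n : ℕ) (hn : 1 ≤ n) : |∑ c ∈ Finset.Icc 1 n, (c:ℝ)⁻¹ - Real.log n| ≤ 1 := by
  have h1 := log_add_one_le_harmonic n
  have h2 := harmonic_le_one_add_log n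
  have e : ((harmonic n : ℚ) : ℝ) = ∑ c ∈ Finset.Icc 1 n, (c:ℝ)⁻¹ := by
    rw [harmonic_eq_sum_Icc]; push_cast; rfl
  rw [e] at h1 h2
  have h3 : Real.log n ≤ Real.log ((n+1 : ℕ):ℝ) :=
    Real.log_le_log (by exact_mod_cast hn) (by push_cast; linarith)
  rw [abs_le]; constructor <;> linarith

lemma total_sum {q κ : ℝ} (hq0 : 0 < q) (hq1 : q ≤ 1) (x : ℕ → ℕ → ℕ → ℝ) (hx : Ap3 x κ) :
    ∃ K : ℝ, 0 < K ∧ ∀ n : ℕ, 1 ≤ n →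
    |∑ c ∈ Finset.Icc 1 n, (c:ℝ)⁻¹ * ((c:ℝ)^(-q) * ∑ b ∈ Finset.Ico 1 c, (b:ℝ)⁻¹ *
      ∑ a ∈ Finset.Ico 1 b, (a:ℝ)⁻¹ * ((a:ℝ)^q * x a b c)) - κ/q/q * Real.log n| ≤ K := by
  obtain ⟨C, hC, hx⟩ := hx
  obtain ⟨D, hD, ho⟩ := outer hq0
  set C1 := |κ|/q + C * (2/q) with hC1
  have hC1' : 0 ≤ C1 := by positivity
  set C2 := |κ/q|/q + C1 * (2/q) with hC2
  have hC2' : 0 ≤ C2 := by positivity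
  refine ⟨C2 * D + |κ/q/q| + 1, by positivity, fun n hn => ?_⟩
  have in2 : ∀ c : ℕ, 1 ≤ c → |∑ b ∈ Finset.Ico 1 c, (b:ℝ)⁻¹ *
      ∑ a ∈ Finset.Ico 1 b, (a:ℝ)⁻¹ * ((a:ℝ)^q * x a b c) - κ/q/q * (c:ℝ)^q| ≤ C2 * (c:ℝ)^(q/2) := by
    intro c hc
    apply wsum hq0 hq1 hC1' _ hc
    intro b hb hbc
    apply wsum hq0 hq1 hC _ hb
    intro a ha hab
    have ha1 : (1:ℝ) ≤ a := by exact_mod_cast ha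
    have e : (a:ℝ)^q * x a b c - κ * (a:ℝ)^q = (a:ℝ)^q * (x a b c - κ) := by ring
    rw [e, abs_mul, abs_of_nonneg (by positivity : (0:ℝ) ≤ (a:ℝ)^q)]
    have h1 := hx a b c ha hab hbc
    have h2 : (a:ℝ)^q / a ≤ (a:ℝ)^(q/2) := by
      rw [← Real.rpow_sub_one (by positivity)]
      apply Real.rpow_le_rpow_of_exponent_le ha1
      linarith
    calc _ ≤ (a:ℝ)^q * (C / a) := by gcongr
      _ = C * ((a:ℝ)^q / a) := by ring
      _ ≤ _ := by gcongr
  have e1 : |∑ c ∈ Finset.Icc 1 n, (c:ℝ)⁻¹ * ((c:ℝ)^(-q) * ∑ b ∈ Finset.Ico 1 c, (b:ℝ)⁻¹ *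
      ∑ a ∈ Finset.Ico 1 b, (a:ℝ)⁻¹ * ((a:ℝ)^q * x a b c)) - κ/q/q * ∑ c ∈ Finset.Icc 1 n, (c:ℝ)⁻¹|
      ≤ C2 * D := by
    refine le_trans ?_ (mul_le_mul_of_nonneg_left (ho n) hC2')
    rw [Finset.mul_sum, ← Finset.sum_sub_distrib, Finset.mul_sum]
    refine (Finset.abs_sum_le_sum_abs _ _).trans (Finset.sum_le_sum ?_)
    intro c hc
    rw [Finset.mem_Icc] at hc
    have hc0 : (0:ℝ) < c := by exact_mod_cast (by omega : 0 < c)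
    have h1 := in2 c hc.1
    set Z := ∑ b ∈ Finset.Ico 1 c, (b:ℝ)⁻¹ *
      ∑ a ∈ Finset.Ico 1 b, (a:ℝ)⁻¹ * ((a:ℝ)^q * x a b c)
    have hcq : (c:ℝ)^(-q) * (c:ℝ)^q = 1 := by rw [← Real.rpow_add hc0]; simp
    have e : (c:ℝ)⁻¹ * ((c:ℝ)^(-q) * Z) - κ/q/q * (c:ℝ)⁻¹ =
        ((c:ℝ)⁻¹ * (c:ℝ)^(-q)) * (Z - κ/q/q * (c:ℝ)^q) := by
      linear_combination κ/q/q * (c:ℝ)⁻¹ * hcq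
    rw [e, abs_mul, abs_of_nonneg (by positivity : (0:ℝ) ≤ (c:ℝ)⁻¹ * (c:ℝ)^(-q))]
    calc _ ≤ ((c:ℝ)⁻¹ * (c:ℝ)^(-q)) * (C2 * (c:ℝ)^(q/2)) := by gcongr
      _ = _ := by ring
  have h2 := harm n hn
  set H := ∑ c ∈ Finset.Icc 1 n, (c:ℝ)⁻¹
  set Z := ∑ c ∈ Finset.Icc 1 n, (c:ℝ)⁻¹ * ((c:ℝ)^(-q) * ∑ b ∈ Finset.Ico 1 c, (b:ℝ)⁻¹ *
      ∑ a ∈ Finset.Ico 1 b, (a:ℝ)⁻¹ * ((a:ℝ)^q * x a b c))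
  have e : Z - κ/q/q * Real.log n = (Z - κ/q/q * H) + κ/q/q * (H - Real.log n) := by ring
  rw [e]
  refine (abs_add_le _ _).trans ?_
  rw [abs_mul]
  have : |κ/q/q| * |H - Real.log n| ≤ |κ/q/q| * 1 := by gcongr
  linarith

lemma reorder (n : ℕ) (f : ℕ → ℕ → ℕ → ℝ) :
    ∑ a ∈ Finset.Icc 1 n, ∑ b ∈ Finset.Ioc a n, ∑ c ∈ Finset.Ioc b n, f a b c =
    ∑ c ∈ Finset.Icc 1 n, ∑ b ∈ Finset.Ico 1 c, ∑ a ∈ Finset.Ico 1 b, f a b c := by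
  rw [Finset.sum_comm' (s' := fun b => Finset.Ico 1 b) (t' := Finset.Icc 1 n)
    (by intro a b; simp only [Finset.mem_Icc, Finset.mem_Ioc, Finset.mem_Ico]; omega)]
  rw [Finset.sum_congr rfl (fun b _ => Finset.sum_comm)]
  rw [Finset.sum_comm' (s' := fun c => Finset.Ico 1 c) (t' := Finset.Icc 1 n)
    (by intro a b; simp only [Finset.mem_Icc, Finset.mem_Ioc, Finset.mem_Ico]; omega)]

lemma blk_mono (m : ℕ) {i j : ℕ} (h : i ≤ j) : blk m i ≤ blk m j := by
  unfold blk
  have : (i-1)/m ≤ (j-1)/m := Nat.div_le_div_right (by omega)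
  omega

lemma mult_eq_cnt (n m : ℕ) (f : ParentSeq (n*m)) {a b : ℕ} (hab : a < b) :
    (mult n m f a b : ℝ) = cnt m a b (n*m) (pval f) := by
  unfold mult cnt
  rw [Finset.card_filter]
  push_cast
  apply Finset.sum_congr rfl
  intro t ht
  rw [Finset.mem_Icc] at ht
  have h1 := pval_range f t ht.1 ht.2
  have h2 := blk_mono m h1.2.le
  have : ((blk m t = a ∧ blk m (pval f t) = b) ∨ (blk m t = b ∧ blk m (pval f t) = a)) ↔
      (blk m t = b ∧ blk m (pval f t) = a) := by
    constructor
    · rintro (h | h)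
      · omega
      · exact h
    · exact Or.inr
  simp only [this]

/-- **Proposition 4.1.** The expected total number of triangles of `G^n_{m,β}` is
`(m(m−1)(1+β)²/β² + m(m−1)²(1+β)³/(β²(2+β))) log n + O(1)`. -/
theorem expected_number_of_triangles (β : ℝ) (hβ : 0 < β) (m : ℕ) (hm : 1 ≤ m) :
    ∃ K : ℝ, 0 < K ∧ ∀ n : ℕ, 2 ≤ n →
      |moriE (n * m) β
          (fun f => ∑ a ∈ Finset.Icc 1 n, ∑ b ∈ Finset.Ioc a n, ∑ c ∈ Finset.Ioc b n,
            (mult n m f a b : ℝ) * (mult n m f a c : ℝ) * (mult n m f b c : ℝ))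
        - ((m : ℝ) * ((m : ℝ) - 1) * (1 + β) ^ 2 / β ^ 2
            + (m : ℝ) * ((m : ℝ) - 1) ^ 2 * (1 + β) ^ 3 / (β ^ 2 * (2 + β)))
          * Real.log n| ≤ K := by
  obtain ⟨x, hx, ex⟩ := T_asymp hβ hm
  have hq0 : 0 < 1 - pp β := by linarith [pp_lt hβ]
  have hq1 : 1 - pp β ≤ 1 := by linarith [pp_pos hβ]
  obtain ⟨K, hK, h⟩ := total_sum hq0 hq1 x hx
  refine ⟨K, hK, fun n hn => ?_⟩
  have hN : 1 ≤ n*m := Nat.mul_pos (by omega) hm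
  have e1 : moriE (n * m) β
          (fun f => ∑ a ∈ Finset.Icc 1 n, ∑ b ∈ Finset.Ioc a n, ∑ c ∈ Finset.Ioc b n,
            (mult n m f a b : ℝ) * (mult n m f a c : ℝ) * (mult n m f b c : ℝ)) =
      ∑ c ∈ Finset.Icc 1 n, (c:ℝ)⁻¹ * ((c:ℝ)^(-(1 - pp β)) * ∑ b ∈ Finset.Ico 1 c, (b:ℝ)⁻¹ *
      ∑ a ∈ Finset.Ico 1 b, (a:ℝ)⁻¹ * ((a:ℝ)^(1 - pp β) * x a b c)) := by
    have s1 : (fun f : ParentSeq (n*m) => ∑ a ∈ Finset.Icc 1 n, ∑ b ∈ Finset.Ioc a n, ∑ c ∈ Finset.Ioc b n,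
            (mult n m f a b : ℝ) * (mult n m f a c : ℝ) * (mult n m f b c : ℝ)) =
        fun f => (fun F => ∑ c ∈ Finset.Icc 1 n, ∑ b ∈ Finset.Ico 1 c, ∑ a ∈ Finset.Ico 1 b,
          cnt m a b (n*m) F * cnt m a c (n*m) F * cnt m b c (n*m) F) (pval f) := by
      funext f
      rw [reorder]
      apply Finset.sum_congr rfl; intro c hc
      apply Finset.sum_congr rfl; intro b hb
      apply Finset.sum_congr rfl; intro a ha
      rw [Finset.mem_Ico] at ha hb
      rw [mult_eq_cnt n m f ha.2, mult_eq_cnt n m f hb.2, mult_eq_cnt n m f (ha.2.trans hb.2)]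
    rw [s1]
    have gen : ∀ N, 1 ≤ N → ∀ X : (ℕ → ℕ) → ℝ, moriE N β (fun f => X (pval f)) = ev β N X := by
      intro N hN X
      obtain ⟨k, rfl⟩ : ∃ k, N = k+1 := ⟨N-1, by omega⟩
      exact moriE_eq_ev β k X
    refine (gen _ hN (fun F => ∑ c ∈ Finset.Icc 1 n, ∑ b ∈ Finset.Ico 1 c, ∑ a ∈ Finset.Ico 1 b,
          cnt m a b (n*m) F * cnt m a c (n*m) F * cnt m b c (n*m) F)).trans ?_
    rw [ev_sum β _ hN]
    apply Finset.sum_congr rfl; intro c hc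
    rw [ev_sum β _ hN, Finset.mul_sum, Finset.mul_sum]
    apply Finset.sum_congr rfl; intro b hb
    rw [ev_sum β _ hN, Finset.mul_sum, Finset.mul_sum, Finset.mul_sum]
    apply Finset.sum_congr rfl; intro a ha
    rw [Finset.mem_Ico] at ha hb
    rw [Finset.mem_Icc] at hc
    exact ex a b c (n*m) ha.1 ha.2 hb.2 (Nat.mul_le_mul_right _ hc.2)
  rw [e1]
  refine le_trans (le_of_eq ?_) (h n (by omega))
  congr 3
  have hm' : (m:ℝ) ≠ 0 := by positivity
  have hq : 1 - pp β = β / (2+β) := by unfold pp; field_simp; ring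
  rw [hq]
  field_simp
  ring
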